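/- For any finite abelian group G, K_1(G) ≤ 2·k(G). -/

import Mathlib

open Finset

/-- `S(I)` is minimal zero-sum: nonempty, zero-sum, and no proper nonempty
subfamily is zero-sum. -/
def IsMinZeroSum {G : Type*} [AddCommGroup G] {ℓ : ℕ} (g : Fin ℓ → G)
    (I : Finset (Fin ℓ)) : Prop :=
  I.Nonempty ∧ ∑ i ∈ I, g i = 0 ∧ ∀ J ⊂ I, J.Nonempty → ∑ i ∈ J, g i ≠ 0

/-- `P` is an irreducible factorization of the indexed multiset `g`: a partition
of the index set all of whose parts are minimal zero-sum. -/
def IsFactorization {G : Type*} [AddCommGroup G] {ℓ : ℕ} (g : Fin ℓ → G)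
    (P : Finpartition (Finset.univ : Finset (Fin ℓ))) : Prop :=
  ∀ I ∈ P.parts, IsMinZeroSum g I

/-- `g` is a unique factorization indexed multiset (UFIM) over `G∖{0}`:
all elements are nonzero and there is exactly one irreducible factorization. -/
def IsUFIM {G : Type*} [AddCommGroup G] {ℓ : ℕ} (g : Fin ℓ → G) : Prop :=
  (∀ i, g i ≠ 0) ∧
  ∃! P : Finpartition (Finset.univ : Finset (Fin ℓ)), IsFactorization g P

/-- The cross number `k(S) = ∑ 1/ord(g_i)`. -/
noncomputable def crossNum {G : Type*} [AddCommGroup G] {ℓ : ℕ} (g : Fin ℓ → G) : ℝ :=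
  ∑ i, (1 : ℝ) / (addOrderOf (g i) : ℝ)

/-- `K₁(G)`: the maximal cross number of a UFIM over `G∖{0}`. -/
noncomputable def K1 (G : Type*) [AddCommGroup G] : ℝ :=
  sSup {x : ℝ | ∃ (ℓ : ℕ) (g : Fin ℓ → G), IsUFIM g ∧ crossNum g = x}

/-- `N₁(G)`: the maximal length of a UFIM over `G∖{0}`. -/
noncomputable def N1 (G : Type*) [AddCommGroup G] : ℕ :=
  sSup {n : ℕ | ∃ g : Fin n → G, IsUFIM g}

/-- `K(G)`: the maximal cross number of a minimal zero-sum indexed multiset over `G∖{0}`. -/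
noncomputable def Kcross (G : Type*) [AddCommGroup G] : ℝ :=
  sSup {x : ℝ | ∃ (ℓ : ℕ) (g : Fin ℓ → G), (∀ i, g i ≠ 0) ∧
    IsMinZeroSum g Finset.univ ∧ crossNum g = x}

/-- `g` is zero-sum free: no nonempty subfamily is zero-sum. -/
def IsZeroSumFree {G : Type*} [AddCommGroup G] {ℓ : ℕ} (g : Fin ℓ → G) : Prop :=
  ∀ I : Finset (Fin ℓ), I.Nonempty → ∑ i ∈ I, g i ≠ 0

/-- The little cross number `k(G)`: the maximal cross number of a zero-sum free
indexed multiset over `G∖{0}`. -/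
noncomputable def littleCross (G : Type*) [AddCommGroup G] : ℝ :=
  sSup {x : ℝ | ∃ (ℓ : ℕ) (g : Fin ℓ → G), (∀ i, g i ≠ 0) ∧
    IsZeroSumFree g ∧ crossNum g = x}


lemma aux_exists_min {G : Type*} [AddCommGroup G] {ℓ : ℕ} (g : Fin ℓ → G)
    (A : Finset (Fin ℓ)) : A.Nonempty → ∑ i ∈ A, g i = 0 →
    ∃ J ⊆ A, IsMinZeroSum g J := by
  induction A using Finset.strongInduction with
  | H A ih =>
    intro hne h0
    by_cases h : ∀ J ⊂ A, J.Nonempty → ∑ i ∈ J, g i ≠ 0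
    · exact ⟨A, Finset.Subset.refl _, hne, h0, h⟩
    · push Not at h
      obtain ⟨J, hJ, hJn, hJ0⟩ := h
      obtain ⟨K, hK, hm⟩ := ih J hJ hJn hJ0
      exact ⟨K, hK.trans hJ.1, hm⟩

lemma aux_extend {G : Type*} [AddCommGroup G] {ℓ : ℕ} (g : Fin ℓ → G)
    {A J : Finset (Fin ℓ)} (hJA : J ⊆ A) (hm : IsMinZeroSum g J)
    (P : Finpartition (A \ J)) (hP : ∀ I ∈ P.parts, IsMinZeroSum g I) :
    ∃ Q : Finpartition A, J ∈ Q.parts ∧ ∀ I ∈ Q.parts, IsMinZeroSum g I := by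
  refine ⟨P.extend (b := J) (c := A) (Finset.nonempty_iff_ne_empty.1 hm.1)
    Finset.sdiff_disjoint (Finset.sdiff_union_of_subset hJA), ?_, ?_⟩
  · simp
  · intro I hI
    simp only [Finpartition.extend_parts, Finset.mem_insert] at hI
    rcases hI with rfl | hI
    · exact hm
    · exact hP I hI

lemma aux_factor {G : Type*} [AddCommGroup G] {ℓ : ℕ} (g : Fin ℓ → G)
    (A : Finset (Fin ℓ)) : ∑ i ∈ A, g i = 0 →
    ∃ P : Finpartition A, ∀ I ∈ P.parts, IsMinZeroSum g I := by
  induction A using Finset.strongInduction with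
  | H A ih =>
    intro h0
    rcases A.eq_empty_or_nonempty with rfl | hne
    · exact ⟨Finpartition.empty _, by simp⟩
    · obtain ⟨J, hJ, hm⟩ := aux_exists_min g A hne h0
      obtain ⟨P, hP⟩ := ih (A \ J) (Finset.sdiff_ssubset hJ hm.1) (by
        have := Finset.sum_sdiff (f := g) hJ
        rw [hm.2.1, h0, add_zero] at this
        exact this)
      obtain ⟨Q, -, hQ⟩ := aux_extend g hJ hm P hP
      exact ⟨Q, hQ⟩

lemma aux_total {G : Type*} [AddCommGroup G] {ℓ : ℕ} (g : Fin ℓ → G)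
    (P : Finpartition (Finset.univ : Finset (Fin ℓ))) (hP : IsFactorization g P) :
    ∑ i, g i = 0 := by
  have h := Finset.sum_biUnion (f := g) (s := P.parts) (t := id) P.disjoint
  rw [P.biUnion_parts] at h
  rw [h]
  exact Finset.sum_eq_zero fun I hI => (hP I hI).2.1

/-- In a UFIM, a nonempty zero-sum subfamily contains a part. -/
lemma aux_contains {G : Type*} [AddCommGroup G] {ℓ : ℕ} (g : Fin ℓ → G)
    (P : Finpartition (Finset.univ : Finset (Fin ℓ))) (hP : IsFactorization g P)
    (hu : ∀ Q, IsFactorization g Q → Q = P)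
    (J : Finset (Fin ℓ)) (hJ : J.Nonempty) (h0 : ∑ i ∈ J, g i = 0) :
    ∃ I ∈ P.parts, I ⊆ J := by
  obtain ⟨K, hK, hm⟩ := aux_exists_min g J hJ h0
  obtain ⟨R, hR⟩ := aux_factor g (Finset.univ \ K) (by
    have := Finset.sum_sdiff (f := g) (Finset.subset_univ K)
    rw [hm.2.1, aux_total g P hP, add_zero] at this
    exact this)
  obtain ⟨Q, hKQ, hQ⟩ := aux_extend g (Finset.subset_univ K) hm R hR
  rw [hu Q hQ] at hKQ
  exact ⟨K, hKQ, hK⟩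

lemma aux_len {G : Type*} [AddCommGroup G] [Fintype G] {ℓ : ℕ} (g : Fin ℓ → G)
    (hg : IsZeroSumFree g) : ℓ ≤ Fintype.card G := by
  by_contra hlt
  push Not at hlt
  obtain ⟨a, b, hab, he⟩ := Fintype.exists_ne_map_eq_of_card_lt
    (fun k : Fin ℓ => ∑ i ∈ Finset.univ.filter (fun i : Fin ℓ => i < k), g i) (by simpa using hlt)
  wlog h : a < b generalizing a b
  · exact this b a hab.symm he.symm (lt_of_le_of_ne (not_lt.1 h) hab.symm)
  have hsub : Finset.univ.filter (fun i : Fin ℓ => i < a) ⊆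
      Finset.univ.filter (fun i : Fin ℓ => i < b) := by
    intro i hi
    simp only [Finset.mem_filter, Finset.mem_univ, true_and] at hi ⊢
    exact hi.trans h
  have hs := Finset.sum_sdiff (f := g) hsub
  rw [← he] at hs
  refine hg _ ⟨a, ?_⟩ (add_eq_right.1 hs)
  simp [h]

lemma aux_cross_le {G : Type*} [AddCommGroup G] {ℓ : ℕ} (g : Fin ℓ → G) :
    crossNum g ≤ ℓ := by
  unfold crossNum
  calc _ ≤ ∑ _i : Fin ℓ, (1 : ℝ) := by
        refine Finset.sum_le_sum fun i _ => ?_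
        rw [one_div]
        exact Nat.cast_inv_le_one _
    _ = ℓ := by simp

lemma aux_subfamily {G : Type*} [AddCommGroup G] [Fintype G] {ℓ : ℕ} (g : Fin ℓ → G)
    (hg : ∀ i, g i ≠ 0) (T : Finset (Fin ℓ))
    (hT : ∀ J ⊆ T, J.Nonempty → ∑ i ∈ J, g i ≠ 0) :
    ∑ i ∈ T, (1 : ℝ) / (addOrderOf (g i) : ℝ) ≤ littleCross G := by
  unfold littleCross
  apply le_csSup
  · refine ⟨Fintype.card G, ?_⟩
    rintro x ⟨n, f, -, hf, rfl⟩
    exact (aux_cross_le f).trans (by exact_mod_cast aux_len f hf)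
  · refine ⟨T.card, fun i => g (T.orderEmbOfFin rfl i), fun i => hg _, ?_, ?_⟩
    · intro I hI h0
      refine hT (I.map (T.orderEmbOfFin rfl).toEmbedding) ?_ (by simpa using hI) ?_
      · intro x hx
        simp only [Finset.mem_map] at hx
        obtain ⟨y, -, rfl⟩ := hx
        exact T.orderEmbOfFin_mem rfl y
      · rw [Finset.sum_map]
        exact h0
    · unfold crossNum
      conv_rhs => rw [← Finset.map_orderEmbOfFin_univ T rfl]
      rw [Finset.sum_map]
      rfl

lemma aux_ufim {G : Type*} [AddCommGroup G] [Fintype G] {ℓ : ℕ} (g : Fin ℓ → G)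
    (h : IsUFIM g) : crossNum g ≤ 2 * littleCross G := by
  obtain ⟨hg, P, hP, hu⟩ := h
  have hex : ∀ I : P.parts, ∃ i, i ∈ I.1 := fun I => (hP I.1 I.2).1
  choose rep hrep using hex
  set R : Finset (Fin ℓ) := Finset.univ.image rep with hR
  have h1 := aux_subfamily g hg R (by
    intro J hJ hJn h0
    obtain ⟨I, hI, hIJ⟩ := aux_contains g P hP hu J hJn h0
    have key : ∀ a ∈ I, a = rep ⟨I, hI⟩ := by
      intro a ha
      have := hJ (hIJ ha)
      simp only [hR, Finset.mem_image, Finset.mem_univ, true_and] at this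
      obtain ⟨K, rfl⟩ := this
      congr 1
      exact Subtype.ext (P.eq_of_mem_parts K.2 hI (hrep K) ha)
    have hs : I = {rep ⟨I, hI⟩} :=
      Finset.eq_singleton_iff_unique_mem.2 ⟨hrep ⟨I, hI⟩, key⟩
    have hz := (hP I hI).2.1
    rw [hs, Finset.sum_singleton] at hz
    exact hg _ hz)
  have h2 := aux_subfamily g hg (Finset.univ \ R) (by
    intro J hJ hJn h0
    obtain ⟨I, hI, hIJ⟩ := aux_contains g P hP hu J hJn h0
    have := hJ (hIJ (hrep ⟨I, hI⟩))
    rw [Finset.mem_sdiff] at this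
    exact this.2 (Finset.mem_image_of_mem _ (Finset.mem_univ _)))
  have h3 := Finset.sum_sdiff (f := fun i => (1 : ℝ) / (addOrderOf (g i) : ℝ))
    (Finset.subset_univ R)
  unfold crossNum
  linarith

/-- Proposition (Girard): for any finite abelian group `G`, `K₁(G) ≤ 2·k(G)`. -/
theorem K1_le_two_littleCross {G : Type*} [AddCommGroup G] [Fintype G] :
    K1 G ≤ 2 * littleCross G := by
  unfold K1
  refine Real.sSup_le ?_ ?_
  · rintro x ⟨ℓ, g, hg, rfl⟩
    exact aux_ufim g hg
  · refine mul_nonneg zero_le_two (Real.sSup_nonneg ?_)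
    rintro x ⟨ℓ, g, -, -, rfl⟩
    exact Finset.sum_nonneg fun i _ => by positivity
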